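/- The gradient of the augmented Lagrangian with respect to v is Lipschitz continuous: with α ≥ 0 and μ ≥ 0, the function L_μ(v) is differentiable in v and for all v, v′ ∈ ℝ^N, ‖∇_v L_μ(v) − ∇_v L_μ(v′)‖ ≤ (α + μ + μ‖A‖²) · ‖v − v′‖, where ‖A‖ is the operator norm of A (so L = α + μ + μδ_A² is a valid Lipschitz constant for ∇_v L_μ; this is Lemma 3 of the paper). -/

import Mathlib

open scoped RealInnerProductSpace

/-- The all-ones vector in `EuclideanSpace ℝ (Fin n)`. -/
noncomputable def allOnes (n : ℕ) : EuclideanSpace ℝ (Fin n) :=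
  (WithLp.equiv 2 _).symm fun _ => (1 : ℝ)

section GradientCalculus

open ContinuousLinearMap

variable {𝕜 E F : Type*} [RCLike 𝕜]
  [NormedAddCommGroup E] [InnerProductSpace 𝕜 E] [CompleteSpace E]
  [NormedAddCommGroup F] [InnerProductSpace 𝕜 F] [CompleteSpace F]

theorem hasGradientAt_add {f g : E → 𝕜} {f' g' x : E}
    (hf : HasGradientAt f f' x) (hg : HasGradientAt g g' x) :
    HasGradientAt (fun w => f w + g w) (f' + g') x := by
  rw [hasGradientAt_iff_hasFDerivAt, map_add]
  exact hf.hasFDerivAt.fun_add hg.hasFDerivAt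

theorem hasGradientAt_sub {f g : E → 𝕜} {f' g' x : E}
    (hf : HasGradientAt f f' x) (hg : HasGradientAt g g' x) :
    HasGradientAt (fun w => f w - g w) (f' - g') x := by
  rw [hasGradientAt_iff_hasFDerivAt, map_sub]
  exact hf.hasFDerivAt.fun_sub hg.hasFDerivAt

theorem hasGradientAt_comp {g : F → 𝕜} {f : E → F} {g' : F} {T : E →L[𝕜] F} {x : E}
    (hg : HasGradientAt g g' (f x)) (hf : HasFDerivAt f T x) :
    HasGradientAt (fun w => g (f w)) (adjoint T g') x := by
  rw [hasGradientAt_iff_hasFDerivAt]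
  refine (hg.hasFDerivAt.comp x hf).congr_fderiv ?_
  ext w
  simp [adjoint_inner_left]

theorem hasGradientAt_comp_sub_const {g : E → 𝕜} {g' x : E} (c : E)
    (hg : HasGradientAt g g' (x - c)) : HasGradientAt (fun w => g (w - c)) g' x := by
  rw [hasGradientAt_iff_hasFDerivAt]
  exact (hasFDerivAt_comp_sub c).2 hg.hasFDerivAt

theorem hasGradientAt_inner_right (a x : E) : HasGradientAt (fun w => inner 𝕜 a w) a x := by
  rw [hasGradientAt_iff_hasFDerivAt]
  exact (innerSL 𝕜 a).hasFDerivAt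

theorem norm_adjoint_apply_apply_le (T : E →L[𝕜] F) (x : E) :
    ‖adjoint T (T x)‖ ≤ ‖T‖ ^ 2 * ‖x‖ := by
  rw [sq, ← norm_adjoint_comp_self T]
  exact (adjoint T ∘L T).le_opNorm x

end GradientCalculus

section AugmentedLagrangian

open ContinuousLinearMap

variable {E F : Type*}
  [NormedAddCommGroup E] [InnerProductSpace ℝ E] [NormedAddCommGroup F] [InnerProductSpace ℝ F]

theorem hasGradientAt_half_mul_norm_sq [CompleteSpace E] (k : ℝ) (x : E) :
    HasGradientAt (fun w => k / 2 * ‖w‖ ^ 2) (k • x) x := by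
  rw [hasGradientAt_iff_hasFDerivAt]
  refine ((hasStrictFDerivAt_norm_sq x).hasFDerivAt.const_mul (k / 2)).congr_fderiv ?_
  ext w
  simp
  ring

/-- The augmented Lagrangian of the QP decoding model, as a function of the primal variable `v` in
an arbitrary real inner product space; the centre `c` of the `α`-term stands for the vector `(1/2)𝟙`
of the paper. -/
noncomputable def augmentedLagrangian (A : E →L[ℝ] F) (lam c : E) (ϱ e₁ y₁ : F) (e₂ y₂ : E)
    (α μ : ℝ) (v : E) : ℝ :=
  ⟪lam, v⟫ - (α / 2) * ‖v - c‖ ^ 2 + ⟪y₁, A v + e₁ - ϱ⟫ + ⟪y₂, v - e₂⟫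
    + (μ / 2) * ‖A v + e₁ - ϱ‖ ^ 2 + (μ / 2) * ‖v - e₂‖ ^ 2

variable [CompleteSpace E] [CompleteSpace F]
  (A : E →L[ℝ] F) (lam c : E) (ϱ e₁ y₁ : F) (e₂ y₂ : E) (α μ : ℝ)

theorem hasGradientAt_augmentedLagrangian (v : E) :
    HasGradientAt (augmentedLagrangian A lam c ϱ e₁ y₁ e₂ y₂ α μ)
      (lam - α • (v - c) + adjoint A y₁ + y₂
        + adjoint A (μ • (A v + e₁ - ϱ)) + μ • (v - e₂)) v := by
  have residual : HasFDerivAt (fun w => A w + e₁ - ϱ) A v :=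
    (A.hasFDerivAt.add_const e₁).sub_const ϱ
  have linear := hasGradientAt_inner_right (𝕜 := ℝ) lam v
  have concave := hasGradientAt_comp_sub_const c (hasGradientAt_half_mul_norm_sq α (v - c))
  have multiplier₁ :=
    hasGradientAt_comp (f := fun w => A w + e₁ - ϱ) (hasGradientAt_inner_right y₁ _) residual
  have multiplier₂ :=
    hasGradientAt_comp_sub_const e₂ (hasGradientAt_inner_right (𝕜 := ℝ) y₂ (v - e₂))
  have penalty₁ :=
    hasGradientAt_comp (f := fun w => A w + e₁ - ϱ) (hasGradientAt_half_mul_norm_sq μ _) residual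
  have penalty₂ := hasGradientAt_comp_sub_const e₂ (hasGradientAt_half_mul_norm_sq μ (v - e₂))
  exact hasGradientAt_add (hasGradientAt_add (hasGradientAt_add (hasGradientAt_add
    (hasGradientAt_sub linear concave) multiplier₁) multiplier₂) penalty₁) penalty₂

-- The right-hand side is the constant Hessian of the quadratic function `L_μ` applied to `v - v'`.
theorem gradient_augmentedLagrangian_sub (v v' : E) :
    gradient (augmentedLagrangian A lam c ϱ e₁ y₁ e₂ y₂ α μ) v
        - gradient (augmentedLagrangian A lam c ϱ e₁ y₁ e₂ y₂ α μ) v'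
      = (μ - α) • (v - v') + μ • adjoint A (A (v - v')) := by
  rw [(hasGradientAt_augmentedLagrangian A lam c ϱ e₁ y₁ e₂ y₂ α μ v).gradient,
    (hasGradientAt_augmentedLagrangian A lam c ϱ e₁ y₁ e₂ y₂ α μ v').gradient]
  simp only [map_add, map_sub, map_smul]
  module

theorem lemma3_lipschitz_gradient_general :
    (∀ v, DifferentiableAt ℝ (augmentedLagrangian A lam c ϱ e₁ y₁ e₂ y₂ α μ) v) ∧
    ∀ v v', ‖gradient (augmentedLagrangian A lam c ϱ e₁ y₁ e₂ y₂ α μ) v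
        - gradient (augmentedLagrangian A lam c ϱ e₁ y₁ e₂ y₂ α μ) v'‖
      ≤ (|μ - α| + |μ| * ‖A‖ ^ 2) * ‖v - v'‖ := by
  refine ⟨fun v => (hasGradientAt_augmentedLagrangian A lam c ϱ e₁ y₁ e₂ y₂ α μ v).differentiableAt,
    fun v v' => ?_⟩
  rw [gradient_augmentedLagrangian_sub]
  calc ‖(μ - α) • (v - v') + μ • adjoint A (A (v - v'))‖
      ≤ |μ - α| * ‖v - v'‖ + |μ| * ‖adjoint A (A (v - v'))‖ := by
        simpa only [norm_smul, Real.norm_eq_abs] using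
          norm_add_le ((μ - α) • (v - v')) (μ • adjoint A (A (v - v')))
    _ ≤ |μ - α| * ‖v - v'‖ + |μ| * (‖A‖ ^ 2 * ‖v - v'‖) := by
        gcongr
        exact norm_adjoint_apply_apply_le A (v - v')
    _ = (|μ - α| + |μ| * ‖A‖ ^ 2) * ‖v - v'‖ := by ring

end AugmentedLagrangian

/-- **Lemma 3**: the augmented Lagrangian `L_μ` is differentiable in `v` and its gradient is
Lipschitz continuous with constant `α + μ + μ‖A‖²`, where `‖A‖` is the operator norm of
`A`. -/
theorem lemma3_lipschitz_gradient (M N : ℕ)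
    (A : EuclideanSpace ℝ (Fin N) →L[ℝ] EuclideanSpace ℝ (Fin M))
    (lam : EuclideanSpace ℝ (Fin N)) (ϱ e₁ y₁ : EuclideanSpace ℝ (Fin M))
    (e₂ y₂ : EuclideanSpace ℝ (Fin N)) (α μ : ℝ) (hα : 0 ≤ α) (hμ : 0 ≤ μ)
    (L : EuclideanSpace ℝ (Fin N) → ℝ)
    (hL : ∀ v, L v =
      ⟪lam, v⟫ - (α / 2) * ‖v - (1 / 2 : ℝ) • allOnes N‖ ^ 2
        + ⟪y₁, A v + e₁ - ϱ⟫ + ⟪y₂, v - e₂⟫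
        + (μ / 2) * ‖A v + e₁ - ϱ‖ ^ 2 + (μ / 2) * ‖v - e₂‖ ^ 2) :
    (∀ v, DifferentiableAt ℝ L v) ∧
    ∀ v v', ‖gradient L v - gradient L v'‖ ≤ (α + μ + μ * ‖A‖ ^ 2) * ‖v - v'‖ := by
  obtain rfl : L = augmentedLagrangian A lam ((1 / 2 : ℝ) • allOnes N) ϱ e₁ y₁ e₂ y₂ α μ :=
    funext hL
  obtain ⟨differentiable, lipschitz⟩ := lemma3_lipschitz_gradient_general
    A lam ((1 / 2 : ℝ) • allOnes N) ϱ e₁ y₁ e₂ y₂ α μ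
  have abs_sub_le : |μ - α| ≤ α + μ := abs_le.2 ⟨by linarith, by linarith⟩
  refine ⟨differentiable, fun v v' => (lipschitz v v').trans ?_⟩
  rw [abs_of_nonneg hμ]
  gcongr
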